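/- For μ sufficiently small one has R_β − μ^β̃ ≤ C μ^{2β̃}/(μ^β̃ − μa) for a constant C depending only on a; in particular R_β ≤ C' μ^β̃ for a constant C' depending only on a. -/

import Mathlib

open Set

/-- The radial scattering data: the rescaled interaction `w_μ(r) = μ⁻² w(r/μ)` (given through its
radial profile `w`), its zero-energy scattering solution `j̃` in radial form, and for each `κ ≥ 1`
the function `f̃_κ` which equals `κ j̃` on `[0, μ^β̃]` and solves
`f̃_κ'' = -½ a μ^(1-3β̃) f̃_κ` beyond `μ^β̃`. -/
structure ScatteringODE where
  a : ℝ
  beta : ℝ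
  mu : ℝ
  w : ℝ → ℝ
  jt : ℝ → ℝ
  jt' : ℝ → ℝ
  ft : ℝ → ℝ → ℝ
  ft' : ℝ → ℝ → ℝ
  ha : 0 < a
  hbeta : beta ∈ Set.Ioo (1/3 : ℝ) 1
  hmu : mu ∈ Set.Ioo (0 : ℝ) 1
  hw_nonneg : ∀ r, 0 ≤ w r
  hw_bdd : ∃ M, ∀ r, w r ≤ M
  hw_supp : ∀ r, 1 < r → w r = 0
  hjt_deriv : ∀ r, HasDerivAt jt (jt' r) r
  hjt_zero : jt 0 = 0
  hjt_ode : ∀ r ∈ Set.Ioo 0 mu, HasDerivAt jt' ((1/2) * (mu⁻¹ ^ 2 * w (r / mu)) * jt r) r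
  hjt_lin : ∀ r, mu ≤ r → jt r = r - mu * a
  hjt_nonneg : ∀ r, 0 ≤ r → 0 ≤ jt r
  hjt_mono : MonotoneOn jt (Set.Ici 0)
  hjt_le : ∀ r, 0 ≤ r → jt r ≤ r
  hft_deriv : ∀ κ r : ℝ, HasDerivAt (ft κ) (ft' κ r) r
  hft_eq : ∀ κ : ℝ, ∀ r ∈ Set.Icc (0:ℝ) (mu ^ beta), ft κ r = κ * jt r
  hft_ode : ∀ κ r : ℝ, mu ^ beta < r →
      HasDerivAt (ft' κ) (-(1/2) * a * mu ^ (1 - 3 * beta) * ft κ r) r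

/-- A scattering setup together with the tangency parameter `κ_β ∈ (1, μ^β̃/(μ^β̃ - μa))` and the
minimal tangency radius `R_β ∈ (μ^β̃, ∞)` at which `f̃_{κ_β}` is tangent to the line `r ↦ r`. -/
structure TangentScattering extends ScatteringODE where
  hsmall : mu * a < mu ^ beta
  kappa : ℝ
  Rb : ℝ
  hkappa : kappa ∈ Set.Ioo 1 (mu ^ beta / (mu ^ beta - mu * a))
  hRb : mu ^ beta < Rb
  htan_val : ft kappa Rb = Rb
  htan_der : ft' kappa Rb = 1
  hRb_min : ∀ R : ℝ, mu ^ beta < R → ft kappa R = R → ft' kappa R = 1 → Rb ≤ R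

/-- The radial form `f̃` of the scattering solution `f_β`, extended by `f̃(r) = r` for `r ≥ R_β`. -/
noncomputable def TangentScattering.fext (S : TangentScattering) (r : ℝ) : ℝ :=
  if r < S.Rb then S.ft S.kappa r else r

open Filter Topology in
/-- Conservation of energy for `f'' = -q f` on `(b, ∞)`, up to and including the left endpoint,
where `f` is only assumed to be differentiable. -/
theorem energy_eq_left_endpoint {f f' : ℝ → ℝ} {b q R : ℝ} (hf : ∀ r, HasDerivAt f (f' r) r)
    (hf' : ∀ r, b < r → HasDerivAt f' (-q * f r) r) (hR : b < R) :
    f' R ^ 2 + q * f R ^ 2 = f' b ^ 2 + q * f b ^ 2 := by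
  have hcont : Continuous f := continuous_iff_continuousAt.2 fun r => (hf r).continuousAt
  have hconst : ∀ r ∈ Ioi b, f' r ^ 2 + q * f r ^ 2 = f' R ^ 2 + q * f R ^ 2 := by
    have hE : ∀ r ∈ Ioi b, HasDerivAt (fun r => f' r ^ 2 + q * f r ^ 2) 0 r := by
      intro r hr
      refine (((hf' r hr).pow 2).add (((hf r).pow 2).const_mul q)).congr_deriv ?_
      push_cast
      ring
    intro r hr
    exact isOpen_Ioi.is_const_of_deriv_eq_zero isPreconnected_Ioi
      (fun x hx => (hE x hx).differentiableAt.differentiableWithinAt)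
      (fun x hx => (hE x hx).deriv) hr hR
  have hmean : ∀ r, ∃ ξ, b < r → ξ ∈ Ioo b r ∧ f' ξ = slope f b r := by
    intro r
    by_cases hr : b < r
    · obtain ⟨ξ, hξ, h⟩ := exists_hasDerivAt_eq_slope f f' hr hcont.continuousOn
        fun x _ => hf x
      exact ⟨ξ, fun _ => ⟨hξ, by rw [h, slope_def_field]⟩⟩
    · exact ⟨b, fun h => absurd h hr⟩
  choose ξ hξ using hmean
  have hξb : Tendsto ξ (𝓝[>] b) (𝓝 b) := by
    refine tendsto_of_tendsto_of_tendsto_of_le_of_le' tendsto_const_nhds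
      (tendsto_nhdsWithin_of_tendsto_nhds tendsto_id) ?_ ?_
    · filter_upwards [self_mem_nhdsWithin] with r hr using (hξ r hr).1.1.le
    · filter_upwards [self_mem_nhdsWithin] with r hr using (hξ r hr).1.2.le
  have hfξ : Tendsto (fun r => f (ξ r)) (𝓝[>] b) (𝓝 (f b)) := (hcont.tendsto b).comp hξb
  have hf'ξ : Tendsto (fun r => f' (ξ r)) (𝓝[>] b) (𝓝 (f' b)) := by
    have hslope : Tendsto (slope f b) (𝓝[>] b) (𝓝 (f' b)) :=
      (hasDerivAt_iff_tendsto_slope.1 (hf b)).mono_left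
        (nhdsWithin_mono b fun x hx => ne_of_gt hx)
    refine hslope.congr' ?_
    filter_upwards [self_mem_nhdsWithin] with r hr using (hξ r hr).2.symm
  refine tendsto_nhds_unique (tendsto_const_nhds.congr' ?_)
    ((hf'ξ.pow 2).add ((hfξ.pow 2).const_mul q))
  filter_upwards [self_mem_nhdsWithin] with r hr using (hconst _ (hξ r hr).1.1).symm

theorem HasDerivAt.eq_of_eqOn_Icc_right {f g : ℝ → ℝ} {f' g' x y : ℝ} (hxy : x < y)
    (hf : HasDerivAt f f' y) (hg : HasDerivAt g g' y) (h : EqOn f g (Icc x y)) : f' = g' :=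
  (uniqueDiffOn_Icc hxy y (right_mem_Icc.2 hxy.le)).eq_deriv _ hf.hasDerivWithinAt
    (hg.hasDerivWithinAt.congr h (h (right_mem_Icc.2 hxy.le)))

/-- Non-negativity and monotonicity of `j̃` force the scattering length of the unscaled
interaction to be smaller than the radius of its support. -/
theorem ScatteringODE.a_lt_one (S : ScatteringODE) : S.a < 1 := by
  obtain ⟨hmu, -⟩ := S.hmu
  have hval : S.jt S.mu = S.mu - S.mu * S.a := S.hjt_lin S.mu le_rfl
  have hle : S.a ≤ 1 := by
    have := S.hjt_nonneg S.mu hmu.le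
    nlinarith
  refine lt_of_le_of_ne hle fun h1 => ?_
  have hzero : EqOn S.jt (fun _ => 0) (Icc 0 S.mu) := fun r hr => by
    refine le_antisymm ?_ (S.hjt_nonneg r hr.1)
    have := S.hjt_mono (mem_Ici.2 hr.1) (mem_Ici.2 hmu.le) hr.2
    simpa [hval, h1] using this
  have hleft : S.jt' S.mu = 0 :=
    (S.hjt_deriv S.mu).eq_of_eqOn_Icc_right hmu (hasDerivAt_const _ _) hzero
  have hright : S.jt' S.mu = 1 :=
    (uniqueDiffWithinAt_Ici S.mu).eq_deriv _ (S.hjt_deriv S.mu).hasDerivWithinAt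
      (((hasDerivAt_id S.mu).sub_const (S.mu * S.a)).hasDerivWithinAt.congr
        (fun r hr => S.hjt_lin r hr) hval)
  linarith

theorem ScatteringODE.mu_lt_rpow_beta (S : ScatteringODE) : S.mu < S.mu ^ S.beta := by
  simpa using Real.rpow_lt_rpow_of_exponent_gt S.hmu.1 S.hmu.2 S.hbeta.2

theorem ScatteringODE.ft_rpow_beta (S : ScatteringODE) (κ : ℝ) :
    S.ft κ (S.mu ^ S.beta) = κ * (S.mu ^ S.beta - S.mu * S.a) := by
  rw [S.hft_eq κ _ (right_mem_Icc.2 (S.hmu.1.trans S.mu_lt_rpow_beta).le),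
    S.hjt_lin _ S.mu_lt_rpow_beta.le]

theorem ScatteringODE.ft'_rpow_beta (S : ScatteringODE) (κ : ℝ) :
    S.ft' κ (S.mu ^ S.beta) = κ := by
  refine (S.hft_deriv κ _).eq_of_eqOn_Icc_right (g := fun r => κ * (r - S.mu * S.a))
    S.mu_lt_rpow_beta ?_ fun r hr => ?_
  · simpa using ((hasDerivAt_id (S.mu ^ S.beta)).sub_const (S.mu * S.a)).const_mul κ
  · rw [S.hft_eq κ r ⟨S.hmu.1.le.trans hr.1, hr.2⟩, S.hjt_lin r hr.1]

theorem TangentScattering.Rb_le (S : TangentScattering) :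
    S.Rb ≤ (1 + 2 / (1 - S.a)) * S.mu ^ S.beta := by
  have hmu := S.hmu.1
  have ha := S.ha
  have ha1 : 0 < 1 - S.a := sub_pos.2 S.a_lt_one
  have hmub := S.mu_lt_rpow_beta
  have hq : S.mu ^ (1 - 3 * S.beta) = S.mu / (S.mu ^ S.beta) ^ 3 := by
    rw [Real.rpow_sub hmu, Real.rpow_one, mul_comm 3, Real.rpow_mul hmu.le]
    norm_cast
  have henergy := energy_eq_left_endpoint (q := 1 / 2 * S.a * S.mu ^ (1 - 3 * S.beta))
    (S.hft_deriv S.kappa)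
    (fun r hr => (S.hft_ode S.kappa r hr).congr_deriv (by ring)) S.hRb
  rw [S.htan_val, S.htan_der, S.ft_rpow_beta, S.ft'_rpow_beta, hq] at henergy
  obtain ⟨hk1, hk2⟩ := S.hkappa
  have hsmall := S.hsmall
  have hRb := S.hRb
  set b := S.mu ^ S.beta
  set d := b - S.mu * S.a with hd
  have hb : 0 < b := hmu.trans hmub
  have hd0 : 0 < d := sub_pos.2 hsmall
  have hdb : (1 - S.a) * b ≤ d := by nlinarith
  have hkd : S.kappa * d < b := (lt_div_iff₀ hd0).1 hk2
  have hkd2 : (S.kappa * d) ^ 2 ≤ b ^ 2 := by gcongr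
  have hma : 0 < S.a * S.mu := by positivity
  -- the energy identity, cleared of denominators
  have hid : S.a * S.mu * (S.Rb ^ 2 - (S.kappa * d) ^ 2) = 2 * b ^ 3 * (S.kappa ^ 2 - 1) := by
    field_simp at henergy
    linarith
  have hkappa : (S.kappa ^ 2 - 1) * d ^ 2 ≤ S.a * S.mu * (2 * b) := by
    nlinarith
  have hbound : (S.Rb ^ 2 - b ^ 2) * d ^ 2 ≤ 4 * b ^ 4 := by
    refine le_of_mul_le_mul_left ?_ hma
    have h1 : 2 * b ^ 3 * ((S.kappa ^ 2 - 1) * d ^ 2) ≤ 2 * b ^ 3 * (S.a * S.mu * (2 * b)) := by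
      gcongr
    have h2 : S.a * S.mu * d ^ 2 * (S.kappa * d) ^ 2 ≤ S.a * S.mu * d ^ 2 * b ^ 2 := by gcongr
    linear_combination h1 + h2 + d ^ 2 * hid
  have hscaled : (S.Rb ^ 2 - b ^ 2) * (1 - S.a) ^ 2 ≤ 4 * b ^ 2 := by
    refine le_of_mul_le_mul_left ?_ (pow_pos hb 2)
    have h1 : (S.Rb ^ 2 - b ^ 2) * ((1 - S.a) * b) ^ 2 ≤ (S.Rb ^ 2 - b ^ 2) * d ^ 2 := by
      have : 0 ≤ S.Rb ^ 2 - b ^ 2 := by nlinarith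
      gcongr
    linear_combination h1 + hbound
  have hfinal : S.Rb * (1 - S.a) ≤ ((1 - S.a) + 2) * b := by
    refine le_of_pow_le_pow_left₀ two_ne_zero (by positivity) ?_
    nlinarith [mul_pos ha1 (pow_pos hb 2)]
  have hsplit : (1 + 2 / (1 - S.a)) * b = ((1 - S.a) + 2) * b / (1 - S.a) := by
    field_simp
  rw [hsplit, le_div_iff₀ ha1]
  exact hfinal

/-- For `μ` sufficiently small, `R_β - μ^β̃ ≤ C μ^(2β̃)/(μ^β̃ - μa)` with a constant `C` depending
only on `a`; in particular `R_β ≤ C' μ^β̃` with `C'` depending only on `a`. -/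
theorem Rbeta_le (a : ℝ) (ha : 0 < a) :
    ∃ C > (0:ℝ), ∃ C' > (0:ℝ), ∃ μ₀ > (0:ℝ),
      ∀ S : TangentScattering, S.a = a → S.mu ≤ μ₀ →
        S.Rb - S.mu ^ S.beta ≤ C * S.mu ^ (2 * S.beta) / (S.mu ^ S.beta - S.mu * S.a) ∧
        S.Rb ≤ C' * S.mu ^ S.beta := by
  by_cases ha1 : a < 1
  · have hpos : 0 < 1 - a := sub_pos.2 ha1
    refine ⟨2 / (1 - a), by positivity, 1 + 2 / (1 - a), by positivity, 1, one_pos, ?_⟩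
    rintro S rfl -
    have hRb := S.Rb_le
    refine ⟨?_, hRb⟩
    have hd : 0 < S.mu ^ S.beta - S.mu * S.a := sub_pos.2 S.hsmall
    have hb : 0 < S.mu ^ S.beta := Real.rpow_pos_of_pos S.hmu.1 _
    have hsq : S.mu ^ (2 * S.beta) = (S.mu ^ S.beta) ^ 2 := by
      rw [mul_comm, Real.rpow_mul S.hmu.1.le]
      norm_cast
    have hma : 0 < S.mu * S.a := mul_pos S.hmu.1 S.ha
    rw [hsq, mul_div_assoc]
    calc S.Rb - S.mu ^ S.beta ≤ 2 / (1 - S.a) * S.mu ^ S.beta := by linarith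
      _ ≤ _ := by
        gcongr
        rw [le_div_iff₀ hd]
        nlinarith
  · refine ⟨1, one_pos, 1, one_pos, 1, one_pos, ?_⟩
    rintro S rfl -
    exact absurd S.a_lt_one ha1
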